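/- Let n ≥ 1 and let D_1,…,D_n be integers with D_i ≥ 3, and set M := ∑_{i=1}^n D_i. Let C_1,…,C_n be pairwise disjoint sets with |C_i| = D_i whose union is a set X of size M, and let T denote the collection of all n-element subsets of X meeting each C_i in exactly one element (the transversals). Then there exists a bijection ψ: ℤ_{D_1} × … × ℤ_{D_n} → T such that for every family F ⊆ ℤ_{D_1} × … × ℤ_{D_n}, F is sunflower-free (in the coordinate sense) if and only if the set system ψ(F) := {ψ(v) : v ∈ F} is sunflower-free (contains no sunflower with 3 petals). -/

import Mathlib

/-- Exactly two of `a`, `b`, `c` are equal. -/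
def ExactlyTwoEq {β : Type*} (a b c : β) : Prop :=
  (a = b ∧ a ≠ c) ∨ (a = c ∧ a ≠ b) ∨ (b = c ∧ a ≠ b)

/-- A family `F ⊆ ℤ_{D_1} × … × ℤ_{D_n}` is sunflower-free in the coordinate sense. -/
def SunflowerFreePi (n : ℕ) (D : Fin n → ℕ) (F : Finset (∀ i, ZMod (D i))) : Prop :=
  ∀ x ∈ F, ∀ y ∈ F, ∀ z ∈ F, x ≠ y → y ≠ z → x ≠ z →
    ∃ i : Fin n, ExactlyTwoEq (x i) (y i) (z i)

/-- Three (distinct) sets form a sunflower with 3 petals. -/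
def IsThreeSunflower {α : Type*} [DecidableEq α] (A B C : Finset α) : Prop :=
  A ∩ B = A ∩ B ∩ C ∧ A ∩ C = A ∩ B ∩ C ∧ B ∩ C = A ∩ B ∩ C

/-- A family of sets is sunflower-free if no three distinct members form a
sunflower with 3 petals. -/
def SunflowerFree {α : Type*} [DecidableEq α] (F : Finset (Finset α)) : Prop :=
  ¬ ∃ A ∈ F, ∃ B ∈ F, ∃ C ∈ F, A ≠ B ∧ A ≠ C ∧ B ≠ C ∧ IsThreeSunflower A B C

/-!
Label the points of `C i` by the elements of the `i`-th factor, and send `v` to the set of points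
labelled `(i, v i)`. A point labelled `(i, a)` lies in the image of `v` exactly when `v i = a`, so
three images form a sunflower, i.e. no point lies in exactly two of them, precisely when no
coordinate takes exactly two equal values.
-/

open Finset Function

section Sunflower

variable {α ι : Type*} {κ : ι → Type*}

/-- Sunflower-freeness in the coordinate sense for a family of elements of an arbitrary product;
`SunflowerFreePi` is the case of the factors `ZMod (D i)`. -/
def CoordSunflowerFree (F : Finset (∀ i, κ i)) : Prop :=
  ∀ x ∈ F, ∀ y ∈ F, ∀ z ∈ F, x ≠ y → y ≠ z → x ≠ z → ∃ i, ExactlyTwoEq (x i) (y i) (z i)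

lemma not_exactlyTwoEq_iff {a b c : α} :
    ¬ ExactlyTwoEq a b c ↔
      ∀ t, (a = t → b = t → c = t) ∧ (a = t → c = t → b = t) ∧ (b = t → c = t → a = t) := by
  unfold ExactlyTwoEq
  grind

lemma isThreeSunflower_iff [DecidableEq α] {A B C : Finset α} :
    IsThreeSunflower A B C ↔
      ∀ p, (p ∈ A → p ∈ B → p ∈ C) ∧ (p ∈ A → p ∈ C → p ∈ B) ∧ (p ∈ B → p ∈ C → p ∈ A) := by
  simp only [IsThreeSunflower, Finset.ext_iff, mem_inter]
  grind

lemma sunflowerFree_image_iff [DecidableEq α] {ψ : (∀ i, κ i) → Finset α} (hψ : Injective ψ)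
    (hsunflower : ∀ x y z,
      IsThreeSunflower (ψ x) (ψ y) (ψ z) ↔ ∀ i, ¬ ExactlyTwoEq (x i) (y i) (z i))
    (F : Finset (∀ i, κ i)) : SunflowerFree (F.image ψ) ↔ CoordSunflowerFree F := by
  simp only [SunflowerFree, CoordSunflowerFree, exists_mem_image, hψ.ne_iff, hsunflower]
  grind

end Sunflower

section Transversal

variable {α ι : Type*} {κ : ι → Type*}

lemma exists_sigma_embedding_of_card_eq [∀ i, Fintype (κ i)] {C : ι → Finset α}
    (hdisj : Pairwise (Disjoint on C)) (hcard : ∀ i, #(C i) = Fintype.card (κ i)) :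
    ∃ e : (Σ i, κ i) ↪ α, ∀ i p, p ∈ C i ↔ ∃ a, e ⟨i, a⟩ = p := by
  have label (i : ι) : κ i ≃ C i := Fintype.equivOfCardEq (by rw [Fintype.card_coe, hcard])
  have hdisj_coe : Pairwise (Disjoint on fun i ↦ (C i : Set α)) := fun i j hij ↦
    disjoint_coe.2 (hdisj hij)
  refine ⟨(Equiv.sigmaCongrRight label).toEmbedding.trans (Embedding.sigmaSet hdisj_coe),
    fun i p ↦ ⟨fun hp ↦ ⟨(label i).symm ⟨p, hp⟩, ?_⟩, ?_⟩⟩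
  · simp
  · rintro ⟨a, rfl⟩
    exact (label i a).2

variable [Fintype ι]

/-- The transversals of `C`: the subsets of `⋃ i, C i` meeting each `C i` in exactly one point.
Their cardinality is not prescribed, as for pairwise disjoint `C i` it is that of `ι`. -/
def transversals [DecidableEq α] (C : ι → Finset α) : Finset (Finset α) :=
  {S ∈ (univ.biUnion C).powerset | ∀ i, #(S ∩ C i) = 1}

/-- The transversal selecting, for each `i`, the point of the `i`-th block labelled by `v i`, where
`e` labels the points of disjoint blocks by pairs `⟨i, a⟩`. -/
def selectedPoints (e : (Σ i, κ i) ↪ α) (v : ∀ i, κ i) : Finset α :=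
  univ.map ⟨fun i ↦ e ⟨i, v i⟩, fun _ _ h ↦ congrArg Sigma.fst (e.injective h)⟩

lemma mem_selectedPoints {e : (Σ i, κ i) ↪ α} {v : ∀ i, κ i} {p : α} :
    p ∈ selectedPoints e v ↔ ∃ i, e ⟨i, v i⟩ = p := by
  simp only [selectedPoints, mem_map, mem_univ, true_and]
  rfl

lemma apply_mem_selectedPoints {e : (Σ i, κ i) ↪ α} {v : ∀ i, κ i} {i : ι} {a : κ i} :
    e ⟨i, a⟩ ∈ selectedPoints e v ↔ v i = a := by
  rw [mem_selectedPoints]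
  constructor
  · rintro ⟨j, hj⟩
    cases e.injective hj
    rfl
  · rintro rfl
    exact ⟨i, rfl⟩

lemma selectedPoints_injective (e : (Σ i, κ i) ↪ α) : Injective (selectedPoints e) := by
  intro v w h
  funext i
  rw [← apply_mem_selectedPoints (e := e), h, apply_mem_selectedPoints]

variable [DecidableEq α]

lemma isThreeSunflower_selectedPoints (e : (Σ i, κ i) ↪ α) (x y z : ∀ i, κ i) :
    IsThreeSunflower (selectedPoints e x) (selectedPoints e y) (selectedPoints e z) ↔
      ∀ i, ¬ ExactlyTwoEq (x i) (y i) (z i) := by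
  simp only [isThreeSunflower_iff, not_exactlyTwoEq_iff]
  constructor
  · intro h i a
    simpa only [apply_mem_selectedPoints] using h (e ⟨i, a⟩)
  · intro h p
    by_cases hp : ∃ s, e s = p
    · obtain ⟨⟨i, a⟩, rfl⟩ := hp
      simpa only [apply_mem_selectedPoints] using h i a
    · have hp_notMem (v : ∀ i, κ i) : p ∉ selectedPoints e v := fun hv ↦
        let ⟨i, hi⟩ := mem_selectedPoints.1 hv
        hp ⟨⟨i, v i⟩, hi⟩
      simp only [hp_notMem, false_imp_iff, and_self]

lemma selectedPoints_inter_eq_singleton {e : (Σ i, κ i) ↪ α} {i : ι} {A : Finset α}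
    (hA : ∀ p, p ∈ A ↔ ∃ a, e ⟨i, a⟩ = p) (v : ∀ i, κ i) :
    selectedPoints e v ∩ A = {e ⟨i, v i⟩} := by
  ext p
  rw [mem_inter, hA, mem_singleton]
  constructor
  · rintro ⟨hp, a, rfl⟩
    rw [apply_mem_selectedPoints.1 hp]
  · rintro rfl
    exact ⟨apply_mem_selectedPoints.2 rfl, v i, rfl⟩

lemma biUnion_inter_eq_of_mem_transversals {C : ι → Finset α} {S : Finset α}
    (hS : S ∈ transversals C) : (univ.biUnion fun i ↦ S ∩ C i) = S := by
  rw [← inter_biUnion, inter_eq_left, ← mem_powerset]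
  exact (mem_filter.1 hS).1

lemma card_eq_of_mem_transversals {C : ι → Finset α} (hdisj : Pairwise (Disjoint on C))
    {S : Finset α} (hS : S ∈ transversals C) : #S = Fintype.card ι := by
  have hdisj_inter : ((univ : Finset ι) : Set ι).PairwiseDisjoint fun i ↦ S ∩ C i :=
    fun i _ j _ hij ↦ (hdisj hij).mono inter_subset_right inter_subset_right
  calc
    #S = #(univ.biUnion fun i ↦ S ∩ C i) := by rw [biUnion_inter_eq_of_mem_transversals hS]
    _ = ∑ i, #(S ∩ C i) := card_biUnion hdisj_inter
    _ = ∑ _i : ι, 1 := sum_congr rfl fun i _ ↦ (mem_filter.1 hS).2 i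
    _ = Fintype.card ι := Fintype.card_eq_sum_ones.symm

lemma mem_transversals_iff {C : ι → Finset α} (hdisj : Pairwise (Disjoint on C)) {S : Finset α} :
    S ∈ transversals C ↔
      S ⊆ univ.biUnion C ∧ #S = Fintype.card ι ∧ ∀ i, #(S ∩ C i) = 1 := by
  have hcard : S ∈ transversals C → #S = Fintype.card ι := card_eq_of_mem_transversals hdisj
  simp only [transversals, mem_filter, mem_powerset] at hcard ⊢
  tauto

lemma selectedPoints_mem_transversals {C : ι → Finset α} {e : (Σ i, κ i) ↪ α}
    (he : ∀ i p, p ∈ C i ↔ ∃ a, e ⟨i, a⟩ = p) (v : ∀ i, κ i) :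
    selectedPoints e v ∈ transversals C := by
  refine mem_filter.2 ⟨mem_powerset.2 fun p hp ↦ ?_, fun i ↦ ?_⟩
  · obtain ⟨i, hi⟩ := mem_selectedPoints.1 hp
    exact mem_biUnion.2 ⟨i, mem_univ i, (he i p).2 ⟨v i, hi⟩⟩
  · rw [selectedPoints_inter_eq_singleton (he i), card_singleton]

lemma exists_selectedPoints_eq {C : ι → Finset α} {e : (Σ i, κ i) ↪ α}
    (he : ∀ i p, p ∈ C i ↔ ∃ a, e ⟨i, a⟩ = p) {S : Finset α} (hS : S ∈ transversals C) :
    ∃ v, selectedPoints e v = S := by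
  have hsingle (i : ι) : ∃ a, S ∩ C i = {e ⟨i, a⟩} := by
    obtain ⟨p, hp⟩ := card_eq_one.1 ((mem_filter.1 hS).2 i)
    obtain ⟨a, rfl⟩ := (he i p).1 (mem_of_mem_inter_right (hp ▸ mem_singleton_self p))
    exact ⟨a, hp⟩
  choose v hv using hsingle
  refine ⟨v, ?_⟩
  rw [← biUnion_inter_eq_of_mem_transversals hS]
  ext p
  simp only [mem_selectedPoints, hv, mem_biUnion, mem_univ, true_and, mem_singleton, eq_comm]

theorem exists_transversal_bijection_general [∀ i, Fintype (κ i)] (C : ι → Finset α)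
    (hdisj : Pairwise (Disjoint on C)) (hcard : ∀ i, #(C i) = Fintype.card (κ i)) :
    ∃ ψ : (∀ i, κ i) → Finset α,
      Injective ψ ∧ (∀ v, ψ v ∈ transversals C) ∧ (∀ S ∈ transversals C, ∃ v, ψ v = S) ∧
      ∀ F : Finset (∀ i, κ i), CoordSunflowerFree F ↔ SunflowerFree (F.image ψ) := by
  obtain ⟨e, he⟩ := exists_sigma_embedding_of_card_eq hdisj hcard
  exact ⟨selectedPoints e, selectedPoints_injective e, selectedPoints_mem_transversals he,
    fun _ hS ↦ exists_selectedPoints_eq he hS, fun F ↦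
      (sunflowerFree_image_iff (selectedPoints_injective e)
        (isThreeSunflower_selectedPoints e) F).symm⟩

end Transversal

theorem exists_transversal_bijection {α : Type*} [DecidableEq α]
    (n : ℕ) (hn : 1 ≤ n) (D : Fin n → ℕ) (hD : ∀ i, 3 ≤ D i)
    (C : Fin n → Finset α) (hdisj : ∀ i j, i ≠ j → Disjoint (C i) (C j))
    (hcard : ∀ i, (C i).card = D i)
    (X : Finset α) (hX : X = Finset.univ.biUnion C)
    (M : ℕ) (hM : M = ∑ i, D i) (hXcard : X.card = M)
    (T : Finset (Finset α))
    (hT : T = X.powerset.filter (fun S => S.card = n ∧ ∀ i, (S ∩ C i).card = 1)) :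
    ∃ ψ : (∀ i, ZMod (D i)) → Finset α,
      Function.Injective ψ ∧ (∀ v, ψ v ∈ T) ∧ (∀ S ∈ T, ∃ v, ψ v = S) ∧
      ∀ F : Finset (∀ i, ZMod (D i)),
        SunflowerFreePi n D F ↔ SunflowerFree (F.image ψ) := by
  have hNeZero (i : Fin n) : NeZero (D i) := ⟨(zero_lt_three.trans_le (hD i)).ne'⟩
  have hpairwise : Pairwise (Disjoint on C) := fun i j ↦ hdisj i j
  obtain rfl : T = transversals C := by
    ext S
    rw [hT, hX, mem_filter, mem_powerset, mem_transversals_iff hpairwise, Fintype.card_fin]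
  exact exists_transversal_bijection_general C hpairwise fun i ↦ (hcard i).trans (ZMod.card _).symm
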